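/- arXiv:1804.08174 — 3 statements merged into one kernel-verified Lean document; each statement's English description precedes it below -/
import Mathlib

section
/- Let M be an irreducible n×n row-stochastic matrix with stationary distribution π, satisfying M_{ij} > 0 ⟺ M_{ji} > 0 for all i, j, and let Q be the maximum entropy RDS measure, Q(α) = Π_i M_{i, α(i)}. For a cycle c = (S, σ) let c_- = (S, σ^{-1}) denote its reversal and w_c = Q(α : A(α) = c) / E_Q[‖A(α)‖]. Then the stationary entropy production rate has the cycle representation: Σ_{(i,j): M_{ij}>0} π_i M_{ij} log( M_{ij} / M_{ji} ) = Σ_{cycles c with w_c > 0} w_c log( w_c / w_{c_-} ). -/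
open Finset
open scoped Classical

/-!
A map `f` has attractor `c = (S, σ)` iff it equals `σ` on `S` and every orbit of `f` reaches `S`.
Choosing the values on `S` and off `S` independently gives
`Q(A(f) = c) = (∏ x ∈ S, M x (σ x)) * F S`, where `F S` is the weight of the spanning forests rooted
in `S`. The factor `F S` is common to `c` and its reversal, so `log (w_c / w_{c₋})` is the sum of
`log (M x (σ x) / M (σ x) x)` over the cycle.

Let `τ i` be the weight of the spanning trees rooted at `i`. Redirecting the root of such a tree to
`j` produces exactly the maps whose attractor contains the edge `(i, j)`, so `τ i * M i j` is the
total weight of those attractors. A cycle enters and leaves each of its points once, hence `τ` is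
stationary, and by uniqueness `π = τ / ∑ i, τ i`, where `∑ i, τ i` is the mean size of the
attractor. Thus `π i * M i j` is the sum of `w_c` over the cycles `c` through `(i, j)`, and summing
it against `log (M i j / M j i)` gives the representation.
-/

namespace MaxEntropyRDS

open Function Matrix

variable {ι R : Type*}

/-- Every orbit of the map `f` eventually meets `S`. -/
def FlowsInto (f : ι → ι) (S : Set ι) : Prop :=
  ∀ x, ∃ k, f^[k] x ∈ S

theorem FlowsInto.congr {f g : ι → ι} {S : Set ι} (hf : FlowsInto f S) (hfg : Set.EqOn f g Sᶜ) :
    FlowsInto g S := by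
  have reach (k : ℕ) : ∀ x, f^[k] x ∈ S → ∃ m, g^[m] x ∈ S := by
    induction k with
    | zero => exact fun x hx => ⟨0, hx⟩
    | succ k ih =>
      intro x hx
      by_cases hxS : x ∈ S
      · exact ⟨0, hxS⟩
      · rw [iterate_succ_apply, hfg hxS] at hx
        obtain ⟨m, hm⟩ := ih _ hx
        exact ⟨m + 1, hm⟩
  exact fun x => (hf x).elim fun k hk => reach k x hk

theorem flowsInto_periodicPts [Finite ι] (f : ι → ι) : FlowsInto f (periodicPts f) := by
  intro x
  obtain ⟨a, b, hab, h⟩ : ∃ a b, a < b ∧ f^[a] x = f^[b] x := by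
    obtain ⟨a, b, hne, h⟩ := Finite.exists_ne_map_eq_of_infinite fun k : ℕ => f^[k] x
    rcases hne.lt_or_gt with hab | hba
    exacts [⟨a, b, hab, h⟩, ⟨b, a, hba, h.symm⟩]
  refine ⟨a, mk_mem_periodicPts (Nat.sub_pos_of_lt hab) ?_⟩
  rw [IsPeriodicPt, IsFixedPt, ← iterate_add_apply, Nat.sub_add_cancel hab.le, h]

theorem exists_iterate_iterate_eq {f : ι → ι} {x : ι} (hx : x ∈ periodicPts f) (k : ℕ) :
    ∃ m, f^[m] (f^[k] x) = x := by
  have hkx : f^[k] x ∈ periodicPts f := (bijOn_periodicPts f).mapsTo.iterate k hx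
  rw [← mem_periodicOrbit_iff hkx, periodicOrbit_apply_iterate_eq hx]
  exact self_mem_periodicOrbit hx

theorem eqOn_iterate {f g : ι → ι} {S : Set ι} (hfg : Set.EqOn f g S) (hg : Set.MapsTo g S S)
    (k : ℕ) : Set.EqOn f^[k] g^[k] S := by
  induction k with
  | zero => exact Set.eqOn_refl _ _
  | succ k ih =>
    intro x hx
    rw [iterate_succ_apply, iterate_succ_apply, hfg hx, ih (hg hx)]

theorem isCycleOn_iff_exists_iterate {S : Finset ι} {σ : Equiv.Perm ι} (hσ : ∀ x ∉ S, σ x = x) :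
    σ.IsCycleOn S ↔ ∀ x ∈ S, ∀ y ∈ S, ∃ k, σ^[k] x = y := by
  refine ⟨fun h x hx y hy => ?_, fun h => ⟨σ.bijOn fun x => ?_, fun x hx y hy => ?_⟩⟩
  · obtain ⟨k, -, hk⟩ := h.exists_pow_eq hx hy
    exact ⟨k, by rw [Equiv.Perm.iterate_eq_pow, hk]⟩
  · rw [mem_coe, mem_coe, ← not_iff_not]
    exact ⟨fun hx => σ.injective (hσ _ hx) ▸ hx, fun hx => by rwa [hσ x hx]⟩
  · obtain ⟨k, hk⟩ := h x hx y hy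
    exact ⟨k, by rw [zpow_natCast, ← Equiv.Perm.iterate_eq_pow, hk]⟩

section Attractor

variable [Fintype ι]

/-- The set `Per(f)` of periodic points. -/
noncomputable def periodicFinset (f : ι → ι) : Finset ι :=
  {x | x ∈ periodicPts f}

@[simp]
theorem mem_periodicFinset {f : ι → ι} {x : ι} : x ∈ periodicFinset f ↔ x ∈ periodicPts f := by
  simp [periodicFinset]

/-- All periodic points of `f` lie on one cycle. -/
def HasSingleAttractor (f : ι → ι) : Prop :=
  ∀ x ∈ periodicFinset f, ∀ y ∈ periodicFinset f, ∃ k, f^[k] x = y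

theorem flowsInto_singleton_iff {f : ι → ι} {i : ι} :
    FlowsInto f {i} ↔ HasSingleAttractor f ∧ i ∈ periodicFinset f := by
  simp only [FlowsInto, Set.mem_singleton_iff, HasSingleAttractor, mem_periodicFinset]
  refine ⟨fun h => ⟨fun x _ y hy => ?_, ?_⟩, fun ⟨h, hi⟩ x => ?_⟩
  · obtain ⟨k, hk⟩ := h x
    obtain ⟨m, hm⟩ := h y
    obtain ⟨l, hl⟩ := exists_iterate_iterate_eq hy m
    exact ⟨l + k, by rw [iterate_add_apply, hk, ← hm, hl]⟩
  · obtain ⟨k, hk⟩ := h (f i)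
    exact mk_mem_periodicPts k.succ_pos hk
  · obtain ⟨k, hk⟩ := flowsInto_periodicPts f x
    obtain ⟨m, hm⟩ := h _ hk _ hi
    exact ⟨m + k, by rw [iterate_add_apply, hm]⟩

/-- The cycles `(S, σ)` on `ι`; the cyclic permutation `σ` of `S` is encoded as the permutation of
`ι` that extends it by the identity. -/
noncomputable def cycles (ι : Type*) [Fintype ι] : Finset (Finset ι × Equiv.Perm ι) :=
  {c | c.1.Nonempty ∧ (∀ x ∉ c.1, c.2 x = x) ∧ c.2.IsCycleOn c.1}

/-- The reversal `c₋ = (S, σ⁻¹)` of `c = (S, σ)`. -/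
def reversal (c : Finset ι × Equiv.Perm ι) : Finset ι × Equiv.Perm ι :=
  (c.1, c.2⁻¹)

/-- The relation `A(f) = c`: `Per(f) = S`, and `f` agrees with `σ` on `S`, where `c = (S, σ)`. -/
def HasAttractor (f : ι → ι) (c : Finset ι × Equiv.Perm ι) : Prop :=
  periodicFinset f = c.1 ∧ ∀ x ∈ c.1, f x = c.2 x

variable {c : Finset ι × Equiv.Perm ι} {f : ι → ι}

theorem mem_cycles :
    c ∈ cycles ι ↔ c.1.Nonempty ∧ (∀ x ∉ c.1, c.2 x = x) ∧ c.2.IsCycleOn c.1 := by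
  simp [cycles]

theorem cycles_eq_filter_iterate :
    cycles ι = ({c | c.1.Nonempty ∧ (∀ x ∉ c.1, c.2 x = x) ∧
      ∀ x ∈ c.1, ∀ y ∈ c.1, ∃ k, c.2^[k] x = y} : Finset _) :=
  filter_congr fun _ _ => and_congr_right fun _ => and_congr_right isCycleOn_iff_exists_iterate

theorem reversal_mem_cycles (hc : c ∈ cycles ι) : reversal c ∈ cycles ι := by
  obtain ⟨hne, hfix, hcyc⟩ := mem_cycles.1 hc
  exact mem_cycles.2 ⟨hne, fun x hx => Equiv.Perm.inv_eq_iff_eq.2 (hfix x hx).symm, hcyc.inv⟩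

theorem support_subset_of_mem_cycles (hc : c ∈ cycles ι) : {x | c.2 x ≠ x} ⊆ (c.1 : Set ι) :=
  fun x hx => by_contra fun hxS => hx ((mem_cycles.1 hc).2.1 x hxS)

theorem hasAttractor_iff_flowsInto (hc : c ∈ cycles ι) :
    HasAttractor f c ↔ (∀ x ∈ c.1, f x = c.2 x) ∧ FlowsInto f c.1 := by
  obtain ⟨hne, -, hcyc⟩ := mem_cycles.1 hc
  constructor
  · rintro ⟨hper, heq⟩
    refine ⟨heq, fun x => ?_⟩
    simpa [← hper] using flowsInto_periodicPts f x
  · rintro ⟨heq, hflow⟩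
    have hiter := eqOn_iterate heq hcyc.1.mapsTo
    refine ⟨Finset.ext fun x => ?_, heq⟩
    rw [mem_periodicFinset]
    constructor <;> intro hx
    · obtain ⟨k, hk⟩ := hflow x
      obtain ⟨m, hm⟩ := exists_iterate_iterate_eq hx k
      rw [← hm, hiter m hk]
      exact hcyc.1.mapsTo.iterate m hk
    · have hreturn : c.2^[c.1.card] x = x := by
        rw [Equiv.Perm.iterate_eq_pow, hcyc.pow_card_apply hx]
      exact mk_mem_periodicPts (card_pos.2 hne) ((hiter _ hx).trans hreturn)

theorem HasAttractor.hasSingleAttractor (hfc : HasAttractor f c) (hc : c ∈ cycles ι) :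
    HasSingleAttractor f := by
  obtain ⟨-, hfix, hcyc⟩ := mem_cycles.1 hc
  intro x hx y hy
  rw [hfc.1] at hx hy
  obtain ⟨k, hk⟩ := (isCycleOn_iff_exists_iterate hfix).1 hcyc x hx y hy
  exact ⟨k, (eqOn_iterate hfc.2 hcyc.1.mapsTo k hx).trans hk⟩

/-- `Per(f)` together with the permutation of `ι` that agrees with `f` on `Per(f)` and fixes all
other points: the only candidate for `A(f)`. -/
noncomputable def periodicPart (f : ι → ι) : Finset ι × Equiv.Perm ι :=
  (periodicFinset f, Equiv.Perm.ofSubtype (Set.BijOn.equiv f (bijOn_periodicPts f)))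

theorem periodicPart_snd_of_mem {x : ι} (hx : x ∈ periodicFinset f) :
    (periodicPart f).2 x = f x :=
  Equiv.Perm.ofSubtype_apply_of_mem _ (mem_periodicFinset.1 hx)

theorem periodicPart_snd_of_notMem {x : ι} (hx : x ∉ periodicFinset f) :
    (periodicPart f).2 x = x :=
  Equiv.Perm.ofSubtype_apply_of_not_mem _ (mt mem_periodicFinset.2 hx)

theorem hasAttractor_iff_periodicPart_eq (hc : c ∈ cycles ι) :
    HasAttractor f c ↔ periodicPart f = c := by
  refine ⟨fun ⟨hper, heq⟩ => Prod.ext hper (Equiv.ext fun x => ?_), ?_⟩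
  · by_cases hx : x ∈ c.1
    · rw [periodicPart_snd_of_mem (hper ▸ hx), heq x hx]
    · rw [periodicPart_snd_of_notMem (hper ▸ hx), (mem_cycles.1 hc).2.1 x hx]
  · rintro rfl
    exact ⟨rfl, fun x hx => (periodicPart_snd_of_mem hx).symm⟩

theorem periodicPart_mem_cycles (hf : HasSingleAttractor f) (hne : (periodicFinset f).Nonempty) :
    periodicPart f ∈ cycles ι := by
  have hfix : ∀ x ∉ (periodicPart f).1, (periodicPart f).2 x = x :=
    fun x hx => periodicPart_snd_of_notMem hx
  refine mem_cycles.2 ⟨hne, hfix, (isCycleOn_iff_exists_iterate hfix).2 fun x hx y hy => ?_⟩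
  obtain ⟨k, hk⟩ := hf x hx y hy
  refine ⟨k, (eqOn_iterate (S := periodicFinset f) (fun x => periodicPart_snd_of_mem)
    (fun x hx => ?_) k hx).trans hk⟩
  exact mem_periodicFinset.2 ((bijOn_periodicPts f).mapsTo (mem_periodicFinset.1 hx))

end Attractor

section Weights

variable [Fintype ι] [CommSemiring R] (M : Matrix ι ι R)

/-- The weight `Q(f) = ∏ᵢ M i (f i)` of a map under the maximum entropy RDS measure. -/
def mapWeight (f : ι → ι) : R :=
  ∏ i, M i (f i)

/-- The weight `Q(f : A(f) = c)`. -/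
noncomputable def attractorWeight (c : Finset ι × Equiv.Perm ι) : R :=
  ∑ f with HasAttractor f c, mapWeight M f

/-- The total weight of the spanning forests of `ι` directed towards the set of roots `S`. A forest
is encoded as the parent map which fixes every root. -/
noncomputable def forestWeight (S : Finset ι) : R :=
  ∑ f with (∀ x ∈ S, f x = x) ∧ FlowsInto f S, ∏ x ∈ Sᶜ, M x (f x)

/-- The total weight of the spanning trees of `ι` directed towards the root `i`. -/
noncomputable def treeWeight (i : ι) : R :=
  forestWeight M {i}

theorem sum_mapWeight_eqOn_flowsInto (S : Finset ι) (g : ι → ι) :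
    ∑ f with (∀ x ∈ S, f x = g x) ∧ FlowsInto f S, mapWeight M f =
      (∏ x ∈ S, M x (g x)) * forestWeight M S := by
  have redirect (f h : ι → ι) (hf : FlowsInto f S) :
      (∀ x ∈ S, S.piecewise h f x = h x) ∧ FlowsInto (S.piecewise h f) S :=
    ⟨fun x hx => S.piecewise_eq_of_mem h f hx,
      hf.congr fun x hx => (S.piecewise_eq_of_notMem h f hx).symm⟩
  have redirect_back (f h h' : ι → ι) (hf : ∀ x ∈ S, f x = h x) :
      S.piecewise h (S.piecewise h' f) = f := by
    rw [piecewise_idem_right]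
    ext x
    by_cases hx : x ∈ S <;> simp [hx, hf]
  rw [forestWeight, mul_sum]
  refine sum_nbij' (fun f => S.piecewise id f) (fun f => S.piecewise g f) (fun f hf => ?_)
    (fun f hf => ?_) (fun f hf => ?_) (fun f hf => ?_) (fun f hf => ?_) <;>
    simp only [mem_filter_univ] at hf ⊢
  · exact redirect f id hf.2
  · exact redirect f g hf.2
  · exact redirect_back f g id hf.1
  · exact redirect_back f id g hf.1
  · rw [mapWeight, ← prod_mul_prod_compl S]
    refine congr_arg₂ (· * ·) (prod_congr rfl fun x hx => by rw [hf.1 x hx])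
      (prod_congr rfl fun x hx => ?_)
    rw [S.piecewise_eq_of_notMem _ _ (mem_compl.1 hx)]

theorem attractorWeight_eq_prod_mul_forestWeight {c : Finset ι × Equiv.Perm ι}
    (hc : c ∈ cycles ι) :
    attractorWeight M c = (∏ x ∈ c.1, M x (c.2 x)) * forestWeight M c.1 := by
  simp only [attractorWeight, hasAttractor_iff_flowsInto hc, sum_mapWeight_eqOn_flowsInto]

theorem treeWeight_mul_apply (i j : ι) :
    treeWeight M i * M i j = ∑ f with FlowsInto f {i} ∧ f i = j, mapWeight M f := by
  have h := sum_mapWeight_eqOn_flowsInto M {i} fun _ => j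
  simp only [mem_singleton, forall_eq, coe_singleton, prod_singleton] at h
  simp only [and_comm, h, mul_comm, treeWeight]

theorem treeWeight_mul_row_sum (i : ι) :
    treeWeight M i * ∑ j, M i j = ∑ f with FlowsInto f {i}, mapWeight M f := by
  simp only [mul_sum, treeWeight_mul_apply, ← filter_filter]
  exact sum_fiberwise _ (fun f => f i) (mapWeight M)

theorem treeWeight_mul_apply_eq_sum_cycles (i j : ι) :
    treeWeight M i * M i j =
      ∑ c ∈ cycles ι with i ∈ c.1 ∧ c.2 i = j, attractorWeight M c := by
  rw [treeWeight_mul_apply, ← sum_fiberwise_of_maps_to (g := periodicPart)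
    (t := {c ∈ cycles ι | i ∈ c.1 ∧ c.2 i = j})]
  · refine sum_congr rfl fun c hc => sum_congr (Finset.ext fun f => ?_) fun _ _ => rfl
    obtain ⟨hc, hi, hij⟩ := mem_filter.1 hc
    rw [mem_filter, mem_filter_univ, mem_filter_univ, ← hasAttractor_iff_periodicPart_eq hc,
      and_iff_right_of_imp]
    intro hfc
    exact ⟨flowsInto_singleton_iff.2 ⟨hfc.hasSingleAttractor hc, hfc.1 ▸ hi⟩,
      (hfc.2 i hi).trans hij⟩
  · intro f hf
    obtain ⟨hflow, hij⟩ := mem_filter_univ _ |>.1 hf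
    obtain ⟨hsingle, hi⟩ := flowsInto_singleton_iff.1 hflow
    exact mem_filter.2 ⟨periodicPart_mem_cycles hsingle ⟨i, hi⟩, hi,
      (periodicPart_snd_of_mem hi).trans hij⟩

theorem sum_treeWeight_mul_eq_sum_cycles (L : ι → ι → R) :
    ∑ i, ∑ j, treeWeight M i * M i j * L i j =
      ∑ c ∈ cycles ι, attractorWeight M c * ∑ x ∈ c.1, L x (c.2 x) := by
  simp only [treeWeight_mul_apply_eq_sum_cycles, sum_filter, sum_mul]
  simp only [sum_comm (t := cycles ι), mul_sum]
  refine sum_congr rfl fun c _ => ?_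
  simp only [ite_and, ite_mul, zero_mul, sum_ite_irrel, sum_const_zero, sum_ite_eq, mem_univ,
    if_true, sum_ite_mem, univ_inter]

/-- The Markov chain tree theorem. -/
theorem sum_treeWeight_mul_col (j : ι) :
    ∑ i, treeWeight M i * M i j = treeWeight M j * ∑ k, M j k := by
  calc ∑ i, treeWeight M i * M i j
      = ∑ i, ∑ k, treeWeight M i * M i k * (if k = j then 1 else 0) := by simp
    _ = ∑ i, ∑ k, treeWeight M i * M i k * (if i = j then 1 else 0) := by
      simp only [sum_treeWeight_mul_eq_sum_cycles]
      refine sum_congr rfl fun c hc => congr_arg _ ?_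
      exact Equiv.Perm.sum_comp c.2 c.1 (fun x => if x = j then 1 else 0)
        (support_subset_of_mem_cycles hc)
    _ = treeWeight M j * ∑ k, M j k := by simp [← mul_sum]

end Weights

section Stationary

variable [Fintype ι] [DecidableEq ι]

theorem vecMul_pow_eq_self [Semiring R] {M : Matrix ι ι R} {μ : ι → R} (hμ : μ ᵥ* M = μ) (k : ℕ) :
    μ ᵥ* M ^ k = μ := by
  induction k with
  | zero => rw [pow_zero, vecMul_one]
  | succ k ih => rw [pow_succ, ← vecMul_vecMul, ih, hμ]

variable [Ring R] [LinearOrder R] [IsStrictOrderedRing R] {M : Matrix ι ι R}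

theorem stationary_pos_of_pow_apply_pos (hM : M ∈ rowStochastic R ι) {μ : ι → R}
    (hμ : μ ᵥ* M = μ) (hμ0 : ∀ i, 0 ≤ μ i) {i j : ι} (hi : 0 < μ i) {k : ℕ}
    (hk : 0 < (M ^ k) i j) : 0 < μ j := by
  rw [← vecMul_pow_eq_self hμ k]
  exact sum_pos' (fun l _ => mul_nonneg (hμ0 l) (nonneg_of_mem_rowStochastic (pow_mem hM k)))
    ⟨i, mem_univ i, mul_pos hi hk⟩

theorem abs_vecMul_eq_self (hM : M ∈ rowStochastic R ι) {μ : ι → R} (hμ : μ ᵥ* M = μ) :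
    |μ| ᵥ* M = |μ| := by
  have hle (j : ι) : |μ| j ≤ (|μ| ᵥ* M) j := by
    calc |μ| j = |(μ ᵥ* M) j| := by rw [hμ, Pi.abs_apply]
      _ ≤ ∑ i, |μ i * M i j| := abs_sum_le_sum_abs _ _
      _ = (|μ| ᵥ* M) j := by
        simp only [abs_mul, abs_of_nonneg (nonneg_of_mem_rowStochastic hM), vecMul, dotProduct,
          Pi.abs_apply]
  have hmass : ∑ j, |μ| j = ∑ j, (|μ| ᵥ* M) j := by
    simp only [vecMul, dotProduct]
    rw [sum_comm]
    simp only [← mul_sum, sum_row_of_mem_rowStochastic hM, mul_one]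
  exact funext fun j => ((sum_eq_sum_iff_of_le fun j _ => hle j).1 hmass j (mem_univ j)).symm

theorem pos_of_stationary_of_exists_pos (hM : M ∈ rowStochastic R ι) {r : ι}
    (hr : ∀ i, ∃ k, 0 < (M ^ k) i r) {μ : ι → R} (hμ : μ ᵥ* M = μ) (hpos : ∃ i, 0 < μ i) :
    0 < μ r := by
  obtain ⟨i, hi⟩ := hpos
  obtain ⟨k, hk⟩ := hr i
  have hfix : (|μ| + μ) ᵥ* M = |μ| + μ := by rw [add_vecMul, abs_vecMul_eq_self hM hμ, hμ]
  have hsum : 0 < |μ r| + μ r :=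
    stationary_pos_of_pow_apply_pos hM hfix (fun j => neg_le_iff_add_nonneg'.1 (neg_abs_le (μ j)))
      (add_pos_of_nonneg_of_pos (abs_nonneg (μ i)) hi) hk
  by_contra! hneg
  rw [abs_of_nonpos hneg, neg_add_cancel] at hsum
  exact hsum.false

theorem eq_zero_of_stationary_of_sum_eq_zero (hM : M ∈ rowStochastic R ι) {r : ι}
    (hr : ∀ i, ∃ k, 0 < (M ^ k) i r) {μ : ι → R} (hμ : μ ᵥ* M = μ) (hsum : ∑ i, μ i = 0) :
    μ = 0 := by
  by_contra hne
  obtain ⟨i, -, hi⟩ := exists_pos_of_sum_zero_of_exists_nonzero μ hsum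
    ((Function.ne_iff.1 hne).imp fun i hi => ⟨mem_univ i, hi⟩)
  obtain ⟨j, -, hj⟩ := exists_pos_of_sum_zero_of_exists_nonzero (-μ) (s := univ)
    (by simp [hsum])
    ((Function.ne_iff.1 hne).imp fun i hi => ⟨mem_univ i, neg_ne_zero.2 hi⟩)
  have hpos : 0 < μ r := pos_of_stationary_of_exists_pos hM hr hμ ⟨i, hi⟩
  have hneg : 0 < (-μ) r :=
    pos_of_stationary_of_exists_pos hM hr (by rw [neg_vecMul, hμ]) ⟨j, hj⟩
  exact hpos.asymm (neg_pos.1 hneg)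

end Stationary

section SpanningTrees

variable [Fintype ι] [CommSemiring R] [LinearOrder R] [IsStrictOrderedRing R] {M : Matrix ι ι R}

theorem mapWeight_nonneg (hM : ∀ i j, 0 ≤ M i j) (f : ι → ι) : 0 ≤ mapWeight M f :=
  prod_nonneg fun i _ => hM i (f i)

theorem attractorWeight_nonneg (hM : ∀ i j, 0 ≤ M i j) (c : Finset ι × Equiv.Perm ι) :
    0 ≤ attractorWeight M c :=
  sum_nonneg fun f _ => mapWeight_nonneg hM f

theorem attractorWeight_le_treeWeight_mul (hM : ∀ i j, 0 ≤ M i j) {c : Finset ι × Equiv.Perm ι}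
    (hc : c ∈ cycles ι) {x : ι} (hx : x ∈ c.1) :
    attractorWeight M c ≤ treeWeight M x * M x (c.2 x) := by
  rw [treeWeight_mul_apply_eq_sum_cycles]
  exact single_le_sum (fun c _ => attractorWeight_nonneg hM c) (mem_filter.2 ⟨hc, hx, rfl⟩)

theorem treeWeight_nonneg (hM : ∀ i j, 0 ≤ M i j) (i : ι) : 0 ≤ treeWeight M i :=
  sum_nonneg fun f _ => prod_nonneg fun x _ => hM x (f x)

variable [DecidableEq ι]

theorem exists_flowsInto_of_pow_apply_pos (hM : ∀ i j, 0 ≤ M i j) {r : ι}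
    (hr : ∀ i, ∃ k, 0 < (M ^ k) i r) :
    ∃ f : ι → ι, f r = r ∧ FlowsInto f {r} ∧ ∀ x ≠ r, 0 < M x (f x) := by
  let dist (x : ι) : ℕ := Nat.find (hr x)
  have closer (x : ι) (hx : x ≠ r) : ∃ y, 0 < M x y ∧ dist y < dist x := by
    have hpow : 0 < (M ^ dist x) x r := Nat.find_spec (hr x)
    obtain ⟨k, hk⟩ : ∃ k, dist x = k + 1 := by
      refine Nat.exists_eq_succ_of_ne_zero fun h0 => ?_
      rw [h0, pow_zero, one_apply_ne hx] at hpow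
      exact hpow.false
    rw [hk, pow_succ', mul_apply] at hpow
    obtain ⟨y, -, hy⟩ := exists_lt_of_sum_lt (f := fun _ => (0 : R)) (by simpa using hpow)
    have hky : 0 < (M ^ k) y r := pos_of_mul_pos_right hy (hM x y)
    exact ⟨y, (pos_iff_pos_of_mul_pos hy).2 hky, hk ▸ Nat.lt_succ_of_le (Nat.find_min' _ hky)⟩
  choose! next hnext hdist using closer
  let f (x : ι) : ι := if x = r then r else next x
  have hf (x : ι) (hx : x ≠ r) : f x = next x := if_neg hx
  refine ⟨f, if_pos rfl, fun x => ?_, fun x hx => hf x hx ▸ hnext x hx⟩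
  induction hd : dist x using Nat.strong_induction_on generalizing x with
  | _ d ih =>
    by_cases hx : x = r
    · exact ⟨0, hx⟩
    · obtain ⟨k, hk⟩ := ih _ (hd ▸ hf x hx ▸ hdist x hx) (f x) rfl
      exact ⟨k + 1, hk⟩

theorem treeWeight_pos (hM : ∀ i j, 0 ≤ M i j) {r : ι} (hr : ∀ i, ∃ k, 0 < (M ^ k) i r) :
    0 < treeWeight M r := by
  obtain ⟨f, hfr, hflow, hpos⟩ := exists_flowsInto_of_pow_apply_pos hM hr
  refine sum_pos' (fun f _ => prod_nonneg fun x _ => hM x (f x)) ⟨f, ?_, prod_pos fun x hx => ?_⟩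
  · simpa [hfr] using hflow
  · exact hpos x (by simpa using hx)

theorem sum_treeWeight_pos (hM : ∀ i j, 0 ≤ M i j) {r : ι} (hr : ∀ i, ∃ k, 0 < (M ^ k) i r) :
    0 < ∑ i, treeWeight M i :=
  sum_pos' (fun i _ => treeWeight_nonneg hM i) ⟨r, mem_univ r, treeWeight_pos hM hr⟩

end SpanningTrees

theorem stationary_eq_treeWeight_div_sum [Fintype ι] [DecidableEq ι] [Field R] [LinearOrder R]
    [IsStrictOrderedRing R] {M : Matrix ι ι R} (hM : M ∈ rowStochastic R ι) {r : ι}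
    (hr : ∀ i, ∃ k, 0 < (M ^ k) i r) {π : ι → R} (hπ : π ᵥ* M = π) (hπ1 : ∑ i, π i = 1) (i : ι) :
    π i = treeWeight M i / ∑ j, treeWeight M j := by
  have hpos := sum_treeWeight_pos (fun _ _ => nonneg_of_mem_rowStochastic hM) hr
  set Z := ∑ j, treeWeight M j with hZ
  have htree : treeWeight M ᵥ* M = treeWeight M := by
    ext j
    simp only [vecMul, dotProduct, sum_treeWeight_mul_col, sum_row_of_mem_rowStochastic hM,
      mul_one]
  have hzero : π - Z⁻¹ • treeWeight M = 0 := by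
    refine eq_zero_of_stationary_of_sum_eq_zero hM hr ?_ ?_
    · rw [sub_vecMul, smul_vecMul, hπ, htree]
    · simp only [Pi.sub_apply, Pi.smul_apply, smul_eq_mul, sum_sub_distrib, hπ1, ← mul_sum, ← hZ,
        inv_mul_cancel₀ hpos.ne', sub_self]
  rw [congr_fun (sub_eq_zero.1 hzero) i, Pi.smul_apply, smul_eq_mul, inv_mul_eq_div]

section EntropyProduction

variable [Fintype ι] {M : Matrix ι ι ℝ}

/-- The attractor size `‖A(f)‖`. -/
noncomputable def attractorNorm (f : ι → ι) : ℝ :=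
  if HasSingleAttractor f then ((periodicFinset f).card : ℝ) else 0

/-- The cycle weight `w_c = Q(f : A(f) = c) / E_Q[‖A(f)‖]`. -/
noncomputable def cycleWeight (M : Matrix ι ι ℝ) (c : Finset ι × Equiv.Perm ι) : ℝ :=
  attractorWeight M c / ∑ f : ι → ι, mapWeight M f * attractorNorm f

theorem sum_mapWeight_mul_attractorNorm (hM : ∀ i, ∑ j, M i j = 1) :
    ∑ f : ι → ι, mapWeight M f * attractorNorm f = ∑ i, treeWeight M i := by
  have htree (i : ι) : treeWeight M i =
      ∑ f, if HasSingleAttractor f ∧ i ∈ periodicFinset f then mapWeight M f else 0 := by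
    rw [← mul_one (treeWeight M i), ← hM i, treeWeight_mul_row_sum, sum_filter]
    simp only [flowsInto_singleton_iff]
  simp only [htree]
  rw [sum_comm]
  refine sum_congr rfl fun f _ => ?_
  by_cases hf : HasSingleAttractor f
  · simp only [attractorNorm, hf, if_true, true_and, sum_ite_mem, univ_inter, sum_const,
      nsmul_eq_mul, mul_comm]
  · simp only [attractorNorm, hf, if_false, false_and, mul_zero, sum_const_zero]

theorem cycleWeight_eq_attractorWeight_div (hM : ∀ i, ∑ j, M i j = 1)
    (c : Finset ι × Equiv.Perm ι) :
    cycleWeight M c = attractorWeight M c / ∑ i, treeWeight M i := by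
  rw [cycleWeight, sum_mapWeight_mul_attractorNorm hM]

theorem attractorNorm_nonneg (f : ι → ι) : 0 ≤ attractorNorm f := by
  unfold attractorNorm
  positivity

theorem cycleWeight_nonneg (hM : ∀ i j, 0 ≤ M i j) (c : Finset ι × Equiv.Perm ι) :
    0 ≤ cycleWeight M c :=
  div_nonneg (attractorWeight_nonneg hM c)
    (sum_nonneg fun f _ => mul_nonneg (mapWeight_nonneg hM f) (attractorNorm_nonneg f))

theorem log_cycleWeight_div_reversal {c : Finset ι × Equiv.Perm ι} (hc : c ∈ cycles ι)
    (hw : cycleWeight M c ≠ 0) (hrev : ∀ x ∈ c.1, M (c.2 x) x ≠ 0) :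
    Real.log (cycleWeight M c / cycleWeight M (reversal c)) =
      ∑ x ∈ c.1, Real.log (M x (c.2 x) / M (c.2 x) x) := by
  have hprod : ∏ x ∈ c.1, M x (c.2⁻¹ x) = ∏ x ∈ c.1, M (c.2 x) x :=
    (Equiv.Perm.prod_comp' c.2 c.1 M (support_subset_of_mem_cycles hc)).symm
  obtain ⟨hattr, hnorm⟩ := div_ne_zero_iff.1 hw
  rw [attractorWeight_eq_prod_mul_forestWeight M hc] at hattr
  obtain ⟨hfwd, hforest⟩ := mul_ne_zero_iff.1 hattr
  rw [cycleWeight, cycleWeight, div_div_div_cancel_right₀ hnorm,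
    attractorWeight_eq_prod_mul_forestWeight M hc,
    attractorWeight_eq_prod_mul_forestWeight M (reversal_mem_cycles hc), reversal, hprod,
    mul_div_mul_right _ _ hforest, ← prod_div_distrib, Real.log_prod]
  exact fun x hx => div_ne_zero (prod_ne_zero_iff.1 hfwd x hx) (hrev x hx)

variable [DecidableEq ι] {r : ι} {π : ι → ℝ}

theorem sum_stationary_flux_mul_eq_sum_cycles (hM : M ∈ rowStochastic ℝ ι)
    (hr : ∀ i, ∃ k, 0 < (M ^ k) i r) (hπ : π ᵥ* M = π) (hπ1 : ∑ i, π i = 1)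
    (L : ι → ι → ℝ) :
    ∑ i, ∑ j, π i * M i j * L i j =
      ∑ c ∈ cycles ι, cycleWeight M c * ∑ x ∈ c.1, L x (c.2 x) := by
  simp only [stationary_eq_treeWeight_div_sum hM hr hπ hπ1, div_mul_eq_mul_div, ← sum_div,
    cycleWeight_eq_attractorWeight_div fun i => sum_row_of_mem_rowStochastic hM i,
    sum_treeWeight_mul_eq_sum_cycles]

theorem cycleWeight_le_stationary_flux (hM : M ∈ rowStochastic ℝ ι)
    (hr : ∀ i, ∃ k, 0 < (M ^ k) i r) (hπ : π ᵥ* M = π) (hπ1 : ∑ i, π i = 1)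
    {c : Finset ι × Equiv.Perm ι} (hc : c ∈ cycles ι) {x : ι} (hx : x ∈ c.1) :
    cycleWeight M c ≤ π x * M x (c.2 x) := by
  rw [stationary_eq_treeWeight_div_sum hM hr hπ hπ1, div_mul_eq_mul_div,
    cycleWeight_eq_attractorWeight_div fun i => sum_row_of_mem_rowStochastic hM i]
  have hZ := sum_treeWeight_pos hM.1 hr
  gcongr
  exact attractorWeight_le_treeWeight_mul hM.1 hc hx

end EntropyProduction

end MaxEntropyRDS

open MaxEntropyRDS Matrix in
theorem entropy_production_cycle_representation_general {ι : Type*} [Fintype ι] [DecidableEq ι]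
    {M : Matrix ι ι ℝ} (hM : M ∈ rowStochastic ℝ ι) {r : ι} (hr : ∀ i, ∃ k, 0 < (M ^ k) i r)
    {π : ι → ℝ} (hπ : π ᵥ* M = π) (hπ1 : ∑ i, π i = 1)
    (hrev : ∀ i j, 0 < π i * M i j → 0 < M j i) :
    (∑ i, ∑ j, if 0 < M i j then π i * M i j * Real.log (M i j / M j i) else 0) =
      ∑ c ∈ cycles ι with 0 < cycleWeight M c,
        cycleWeight M c * Real.log (cycleWeight M c / cycleWeight M (reversal c)) := by
  calc (∑ i, ∑ j, if 0 < M i j then π i * M i j * Real.log (M i j / M j i) else 0)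
      = ∑ i, ∑ j, π i * M i j * Real.log (M i j / M j i) := by
        refine sum_congr rfl fun i _ => sum_congr rfl fun j _ => ite_eq_left_iff.2 fun hij => ?_
        rw [(hM.1 i j).antisymm' (not_lt.1 hij), mul_zero, zero_mul]
    _ = ∑ c ∈ cycles ι, cycleWeight M c * ∑ x ∈ c.1, Real.log (M x (c.2 x) / M (c.2 x) x) :=
        sum_stationary_flux_mul_eq_sum_cycles hM hr hπ hπ1 fun i j => Real.log (M i j / M j i)
    _ = ∑ c ∈ cycles ι with 0 < cycleWeight M c,
          cycleWeight M c * ∑ x ∈ c.1, Real.log (M x (c.2 x) / M (c.2 x) x) :=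
        (sum_filter_of_ne fun c _ hne =>
          (cycleWeight_nonneg hM.1 c).lt_of_ne' (left_ne_zero_of_mul hne)).symm
    _ = ∑ c ∈ cycles ι with 0 < cycleWeight M c,
          cycleWeight M c * Real.log (cycleWeight M c / cycleWeight M (reversal c)) := by
        refine sum_congr rfl fun c hc => ?_
        obtain ⟨hc, hpos⟩ := mem_filter.1 hc
        rw [log_cycleWeight_div_reversal hc hpos.ne' fun x hx => (hrev _ _ ?_).ne']
        exact hpos.trans_le (cycleWeight_le_stationary_flux hM hr hπ hπ1 hc hx)

/-- Cycle representation of the stationary entropy production rate: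
Σ_{(i,j):M_{ij}>0} π_i M_{ij} log(M_{ij}/M_{ji}) = Σ_{cycles c, w_c>0} w_c log(w_c/w_{c_-}),
where c_- = (S, σ⁻¹) is the reversed cycle and w_c = Q(α : A(α)=c)/E_Q[‖A(α)‖]. -/
theorem entropy_production_cycle_representation (n : ℕ)
    (M : Matrix (Fin n) (Fin n) ℝ)
    (hM0 : ∀ i j, 0 ≤ M i j) (hM1 : ∀ i, ∑ j, M i j = 1)
    (hsym : ∀ i j, 0 < M i j ↔ 0 < M j i)
    (hirr : ∀ i j, ∃ k, 1 ≤ k ∧ 0 < (M ^ k) i j)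
    (π : Fin n → ℝ) (hπ0 : ∀ i, 0 ≤ π i) (hπ1 : ∑ i, π i = 1)
    (hπstat : ∀ j, ∑ i, π i * M i j = π j)
    (Q : (Fin n → Fin n) → ℝ) (hQ : ∀ α, Q α = ∏ i, M i (α i))
    (Per : (Fin n → Fin n) → Finset (Fin n))
    (hPer : ∀ α, Per α = Finset.univ.filter fun x => ∃ k, 1 ≤ k ∧ α^[k] x = x)
    (single : (Fin n → Fin n) → Prop)
    (hsingle : ∀ α, single α ↔ ∀ x ∈ Per α, ∀ y ∈ Per α, ∃ k, α^[k] x = y)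
    (normA : (Fin n → Fin n) → ℝ)
    (hnormA : ∀ α, normA α = if single α then ((Per α).card : ℝ) else 0)
    (EQ : ℝ) (hEQ : EQ = ∑ α : Fin n → Fin n, Q α * normA α)
    (wc : Finset (Fin n) → Equiv.Perm (Fin n) → ℝ)
    (hwc : ∀ S σ, wc S σ =
      (∑ α : Fin n → Fin n, if (Per α = S ∧ ∀ x ∈ S, α x = σ x) then Q α else 0) / EQ) :
    (∑ i, ∑ j, if 0 < M i j then π i * M i j * Real.log (M i j / M j i) else 0)
      = ∑ S : Finset (Fin n), ∑ σ : Equiv.Perm (Fin n),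
          if (S.Nonempty ∧ (∀ x ∉ S, σ x = x) ∧
              (∀ x ∈ S, ∀ y ∈ S, ∃ k, (⇑σ)^[k] x = y) ∧ 0 < wc S σ)
            then wc S σ * Real.log (wc S σ / wc S σ⁻¹) else 0 := by
  obtain ⟨r, -⟩ := nonempty_of_sum_ne_zero (hπ1 ▸ one_ne_zero)
  obtain rfl : Q = MaxEntropyRDS.mapWeight M := funext hQ
  obtain rfl : Per = MaxEntropyRDS.periodicFinset := funext hPer
  obtain rfl : single = MaxEntropyRDS.HasSingleAttractor := funext fun f => propext (hsingle f)
  obtain rfl : normA = MaxEntropyRDS.attractorNorm := funext hnormA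
  have hw : wc = fun S σ => MaxEntropyRDS.cycleWeight M (S, σ) := by
    ext S σ
    rw [hwc, hEQ, ← sum_filter]
    unfold MaxEntropyRDS.cycleWeight MaxEntropyRDS.attractorWeight MaxEntropyRDS.HasAttractor
    congr!
  rw [entropy_production_cycle_representation_general
    (Matrix.mem_rowStochastic_iff_sum.2 ⟨hM0, hM1⟩)
    (fun i => (hirr i r).imp fun _ => And.right) (funext hπstat) hπ1
    (fun i j h => (hsym i j).1 (pos_of_mul_pos_right h (hπ0 i)))]
  simp only [hw, MaxEntropyRDS.cycles_eq_filter_iterate, MaxEntropyRDS.reversal, filter_filter,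
    sum_filter, Fintype.sum_prod_type, and_assoc]
  congr!
end

section
/- (Directed matrix-forest theorem.) Let M be an n×n row-stochastic matrix and let I ⊆ {1,…,n} be nonempty. A directed forest rooted at I is a map τ : {1,…,n} → {1,…,n} with τ(s) = s for all s ∈ I such that for every state j there exists k ≥ 0 with τ^k(j) ∈ I; its weight is Π_{j ∉ I} M_{j, τ(j)}. Then the total weight of all directed forests rooted at I equals det( (Id − M)(I^c) ), where (Id − M)(I^c) is the submatrix of Id − M obtained by deleting all rows and columns with indices in I. -/
open Finset
open scoped Classical

/-!
Each row of the Laplacian is a weighted sum `∑ t, M i t • (e_i - e_t)`, so multilinearity of the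
determinant in the rows expands the minor as `∑ σ, (∏ i ∉ I, M i (σ i)) * det (1 - P_σ)` over all
maps `σ : Iᶜ → V`, where `P_σ` is the 0/1 matrix of the walk that follows `σ` and is killed on `I`.
If this walk reaches `I` from every state, then `P_σ` strictly decreases the number of steps left
to `I`, so it is strictly triangular and the determinant is `1`. Otherwise the indicator of the
states that never reach `I` is fixed by `P_σ` and the determinant is `0`. Extending each `σ` by the
identity on `I` turns the surviving maps into the forests rooted at `I`.
-/

section Determinants

variable {m R : Type*} [Fintype m] [DecidableEq m] [CommRing R]

lemma det_of_sum_smul_rows {κ : Type*} [Fintype κ] (c : m → κ → R) (r : m → κ → m → R) :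
    (Matrix.of fun i => ∑ t, c i t • r i t).det =
      ∑ σ : m → κ, (∏ i, c i (σ i)) * (Matrix.of fun i => r i (σ i)).det := by
  have expand := (Matrix.detRowAlternating (n := m) (R := R)).toMultilinearMap.map_sum
    fun i t => c i t • r i t
  simp only [MultilinearMap.map_smul_univ] at expand
  exact expand

lemma det_one_sub_eq_one_of_strictly_triangular {α : Type*} [LinearOrder α] {b : m → α}
    {N : Matrix m m R} (hN : ∀ i j, b i ≤ b j → N i j = 0) : (1 - N).det = 1 := by
  have triangular : (1 - N).BlockTriangular (OrderDual.toDual ∘ b) := by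
    intro i j (hij : b i < b j)
    have hne : i ≠ j := fun h => hij.ne (congrArg b h)
    simp [hN i j hij.le, hne]
  have block_eq_one (a : αᵒᵈ) :
      (1 - N).toSquareBlock (OrderDual.toDual ∘ b) a = 1 := by
    ext ⟨i, hi⟩ ⟨j, hj⟩
    have hij : b i = b j := OrderDual.toDual.injective (hi.trans hj.symm)
    simp [Matrix.toSquareBlock_def, hN i j hij.le, Matrix.one_apply]
  simp only [triangular.det, block_eq_one, Matrix.det_one, prod_const_one]

end Determinants

lemma exists_rank_decreasing_of_forall_iterate_mem {V : Type*} {I : Set V} {τ : V → V}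
    (h : ∀ j, ∃ k, τ^[k] j ∈ I) : ∃ d : V → ℕ, ∀ i ∉ I, d (τ i) < d i := by
  refine ⟨fun j => Nat.find (h j), fun i hi => ?_⟩
  have pos : 0 < Nat.find (h i) := (Nat.find_pos (h i)).mpr hi
  have reach : τ^[Nat.find (h i) - 1] (τ i) ∈ I := by
    rw [← Function.iterate_succ_apply, Nat.succ_eq_add_one, Nat.sub_add_cancel pos]
    exact Nat.find_spec (h i)
  exact (Nat.find_min' (h (τ i)) reach).trans_lt (Nat.sub_one_lt_of_lt pos)

lemma exists_iterate_apply_mem_iff_of_notMem {V : Type*} {I : Set V} {τ : V → V} {i : V}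
    (hi : i ∉ I) : (∃ k, τ^[k] (τ i) ∈ I) ↔ ∃ k, τ^[k] i ∈ I := by
  rw [← Nat.or_exists_add_one (p := fun k => τ^[k] i ∈ I)]
  simp [hi]

section Forests

variable {V R : Type*} [Fintype V] [DecidableEq V] [CommRing R]

/-- The Laplacian `D - M` of the digraph on `V` with edge weights `M`, where the diagonal matrix `D`
holds the total outgoing weights. Loops cancel. -/
def weightedLaplacian (M : Matrix V V R) : Matrix V V R :=
  Matrix.diagonal (fun i => ∑ j, M i j) - M

variable (R) in
/-- The transition matrix of the deterministic walk which follows `σ` and is killed on entering `I`: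
the row of `i` vanishes when `σ i ∈ I`. -/
def killedStepMatrix (I : Finset V) (σ : {x // x ∉ I} → V) :
    Matrix {x // x ∉ I} {x // x ∉ I} R :=
  (1 : Matrix V V R).submatrix σ Subtype.val

lemma weightedLaplacian_eq_one_sub {M : Matrix V V R} (hM : ∀ i, ∑ j, M i j = 1) :
    weightedLaplacian M = 1 - M := by
  simp [weightedLaplacian, hM]

lemma det_weightedLaplacian_submatrix_eq_sum (M : Matrix V V R) (I : Finset V) :
    ((weightedLaplacian M).submatrix (Subtype.val : {x // x ∉ I} → V) Subtype.val).det =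
      ∑ σ : {x // x ∉ I} → V,
        (∏ i : {x // x ∉ I}, M i (σ i)) * (1 - killedStepMatrix R I σ).det := by
  have rows : (weightedLaplacian M).submatrix Subtype.val Subtype.val =
      Matrix.of fun i : {x // x ∉ I} => ∑ t, M i t •
        ((1 : Matrix {x // x ∉ I} {x // x ∉ I} R) i - fun j => (1 : Matrix V V R) t j.val) := by
    ext i j
    simp [weightedLaplacian, Matrix.diagonal_apply, Matrix.one_apply, mul_sub, sum_sub_distrib,
      Subtype.ext_iff]
  rw [rows, det_of_sum_smul_rows]
  rfl

lemma killedStepMatrix_mulVec {I : Finset V} (σ : {x // x ∉ I} → V) {v : V → R}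
    (hv : ∀ s ∈ I, v s = 0) :
    (killedStepMatrix R I σ).mulVec (fun j => v j) = fun i => v (σ i) := by
  ext i
  calc ∑ j : {x // x ∉ I}, (1 : Matrix V V R) (σ i) j * v j
      = ∑ j ∈ Iᶜ, (1 : Matrix V V R) (σ i) j * v j :=
        (sum_subtype Iᶜ (fun _ => mem_compl) fun j => (1 : Matrix V V R) (σ i) j * v j).symm
    _ = ∑ j, (1 : Matrix V V R) (σ i) j * v j :=
        sum_subset (subset_univ _) fun j _ hj => by simp [hv j (by simpa using hj)]
    _ = v (σ i) := by simp [Matrix.one_apply]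

lemma det_one_sub_killedStepMatrix_of_forall_iterate_mem {I : Finset V} {τ : V → V}
    (h : ∀ j, ∃ k, τ^[k] j ∈ I) :
    (1 - killedStepMatrix R I fun i => τ i).det = 1 := by
  obtain ⟨d, hd⟩ := exists_rank_decreasing_of_forall_iterate_mem (I := (I : Set V)) h
  refine det_one_sub_eq_one_of_strictly_triangular (b := fun i => d i.val) fun i j hij => ?_
  have hne : τ i ≠ j := fun hτ => (hd i i.2).not_ge (hτ ▸ hij)
  simp [killedStepMatrix, hne]

lemma det_one_sub_killedStepMatrix_of_forall_iterate_notMem {I : Finset V} {τ : V → V} {j : V}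
    (hj : ∀ k, τ^[k] j ∉ I) :
    (1 - killedStepMatrix R I fun i => τ i).det = 0 := by
  let v : V → R := fun i => if ∃ k, τ^[k] i ∈ I then 0 else 1
  have v_root : ∀ s ∈ I, v s = 0 := fun s hs => if_pos ⟨0, hs⟩
  have v_step (i : {x // x ∉ I}) : v (τ i) = v i := by
    simp only [v, exists_iterate_apply_mem_iff_of_notMem (I := (I : Set V)) i.2, ← mem_coe]
  have v_j : v j = 1 := if_neg (by simpa using hj)
  have kernel : (1 - killedStepMatrix R I fun i => τ i).mulVec (fun i => v i) = 0 := by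
    rw [Matrix.sub_mulVec, Matrix.one_mulVec, killedStepMatrix_mulVec _ v_root]
    simp only [v_step, sub_self]
  exact Matrix.det_eq_zero_of_mulVec_eq_zero_of_mem_nonZeroDivisors (i := ⟨j, hj 0⟩) kernel
    (v_j ▸ one_mem _)

lemma det_one_sub_killedStepMatrix (I : Finset V) (τ : V → V) :
    (1 - killedStepMatrix R I fun i => τ i).det = if ∀ j, ∃ k, τ^[k] j ∈ I then 1 else 0 := by
  split_ifs with h
  · exact det_one_sub_killedStepMatrix_of_forall_iterate_mem h
  · push Not at h
    obtain ⟨j, hj⟩ := h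
    exact det_one_sub_killedStepMatrix_of_forall_iterate_notMem hj

lemma sum_filter_fixing_eq_sum_restrict {A : Type*} [AddCommMonoid A] (I : Finset V)
    (f : ({x // x ∉ I} → V) → A) :
    ∑ τ : V → V with ∀ s ∈ I, τ s = s, f (fun i => τ i) = ∑ σ, f σ := by
  refine sum_nbij' (fun τ i => τ i) (fun σ x => if hx : x ∉ I then σ ⟨x, hx⟩ else x)
    (by simp) (by simp +contextual) (fun τ hτ => ?_) (fun σ _ => ?_) (by simp)
  · ext x
    by_cases hx : x ∈ I
    · simp [hx, (mem_filter.mp hτ).2 x hx]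
    · simp [hx]
  · ext i
    simp [i.2]

theorem directed_matrix_forest_theorem_general (M : Matrix V V R) (I : Finset V) :
    (∑ τ : V → V,
      if ((∀ s ∈ I, τ s = s) ∧ ∀ j, ∃ k, τ^[k] j ∈ I)
        then ∏ j ∈ Iᶜ, M j (τ j) else 0)
      = ((weightedLaplacian M).submatrix (Subtype.val : {x // x ∉ I} → V) Subtype.val).det := by
  have weight (τ : V → V) : ∏ j ∈ Iᶜ, M j (τ j) = ∏ i : {x // x ∉ I}, M i (τ i) :=
    prod_subtype Iᶜ (fun _ => mem_compl) _
  calc _ = ∑ τ : V → V with ∀ s ∈ I, τ s = s,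
          (∏ i : {x // x ∉ I}, M i (τ i)) * (1 - killedStepMatrix R I fun i => τ i).det := by
        simp only [det_one_sub_killedStepMatrix, weight, sum_filter, ite_and, mul_ite, mul_one,
          mul_zero]
    _ = ∑ σ : {x // x ∉ I} → V,
          (∏ i : {x // x ∉ I}, M i (σ i)) * (1 - killedStepMatrix R I σ).det :=
        sum_filter_fixing_eq_sum_restrict I
          fun σ => (∏ i : {x // x ∉ I}, M i (σ i)) * (1 - killedStepMatrix R I σ).det
    _ = _ := (det_weightedLaplacian_submatrix_eq_sum M I).symm

end Forests

/-- Directed matrix-forest theorem: the total weight of directed forests rooted at a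
nonempty set I equals the principal minor det((Id − M)(Iᶜ)) obtained by deleting the
rows and columns indexed by I. -/
theorem directed_matrix_forest_theorem (n : ℕ)
    (M : Matrix (Fin n) (Fin n) ℝ)
    (hM0 : ∀ i j, 0 ≤ M i j) (hM1 : ∀ i, ∑ j, M i j = 1)
    (I : Finset (Fin n)) (hI : I.Nonempty) :
    (∑ τ : Fin n → Fin n,
      if ((∀ s ∈ I, τ s = s) ∧ ∀ j, ∃ k, τ^[k] j ∈ I)
        then ∏ j ∈ Iᶜ, M j (τ j) else 0)
      = Matrix.det (Matrix.of fun i j : {x : Fin n // x ∉ I} =>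
          ((1 : Matrix (Fin n) (Fin n) ℝ) - M) i.1 j.1) := by
  rw [← weightedLaplacian_eq_one_sub hM1]
  -- The two sums carry different decidability instances.
  convert directed_matrix_forest_theorem_general M I
  rfl
end

section
/- Let M be an n×n row-stochastic matrix and fix states a and b. For a sequence of pairwise distinct states (i_1, …, i_t) with t ≥ 1, i_1 = a and i_t = b (if a = b then necessarily t = 1), define its weight as M_{i_1 i_2} M_{i_2 i_3} ⋯ M_{i_{t−1} i_t} · e(𝓕_{{i_1,…,i_t}}), where e(𝓕_S) is the total weight of directed forests rooted at S. Then the sum of these weights over all such sequences (over all lengths t and all choices of intermediate distinct states) equals e(𝒯_b), the total weight of directed rooted trees with root b. -/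
open Finset
open scoped Classical

/-!
A tree with root `b` contains exactly one path from `a` to `b`, the orbit of `a` up to its first
visit to `b`, so the trees may be grouped by that path. In the group of a path `f`, cutting the
edges of `f` leaves an arbitrary forest rooted at the vertices of `f`, and restoring them undoes the
cut; the weight of the tree is the weight of `f` times the weight of the forest.
-/

section RootedForest

variable {V : Type*} {S T : Set V} {σ τ g : V → V}

/-- `τ` encodes a directed forest with root set `S`, every vertex outside `S` pointing to its
parent `τ j`; the roots are encoded as fixed points of `τ`. -/
def IsRootedForest (S : Set V) (τ : V → V) : Prop :=
  (∀ s ∈ S, τ s = s) ∧ ∀ j, ∃ k, τ^[k] j ∈ S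

theorem exists_iterate_mem_of_eqOn_compl {j : V} (hστ : Set.EqOn σ τ Tᶜ)
    (hσ : ∀ i ∈ T, ∃ k, σ^[k] i ∈ S) (hτ : ∃ k, τ^[k] j ∈ T) : ∃ k, σ^[k] j ∈ S := by
  obtain ⟨k, hk⟩ := hτ
  induction k generalizing j with
  | zero => exact hσ j hk
  | succ k ih =>
    by_cases hj : j ∈ T
    · exact hσ j hj
    · obtain ⟨m, hm⟩ := ih hk
      exact ⟨m + 1, by rwa [Function.iterate_succ_apply, hστ hj]⟩

theorem iterate_eq_of_eqOn_of_mapsTo (h : Set.EqOn σ g T) (hg : Set.MapsTo g T T) (k : ℕ) :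
    Set.EqOn σ^[k] g^[k] T := by
  induction k with
  | zero => exact fun _ _ => rfl
  | succ k ih =>
    intro j hj
    rw [Function.iterate_succ_apply, Function.iterate_succ_apply, h hj, ih (hg hj)]

theorem IsRootedForest.piecewise_id [∀ j, Decidable (j ∈ T)] (hτ : IsRootedForest S τ)
    (hST : S ⊆ T) : IsRootedForest T (T.piecewise id τ) := by
  refine ⟨fun j hj => T.piecewise_eq_of_mem _ _ hj, fun j => ?_⟩
  obtain ⟨k, hk⟩ := hτ.2 j
  exact exists_iterate_mem_of_eqOn_compl (T.piecewise_eqOn_compl id τ)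
    (fun i hi => ⟨0, hi⟩) ⟨k, hST hk⟩

theorem IsRootedForest.piecewise [∀ j, Decidable (j ∈ T)] (hg : IsRootedForest S g)
    (hST : S ⊆ T) (hgT : Set.MapsTo g T T) (hτ : IsRootedForest T τ) :
    IsRootedForest S (T.piecewise g τ) := by
  refine ⟨fun j hj => ?_, fun j => ?_⟩
  · rw [T.piecewise_eq_of_mem _ _ (hST hj), hg.1 j hj]
  · refine exists_iterate_mem_of_eqOn_compl (T.piecewise_eqOn_compl g τ) (fun i hi => ?_) (hτ.2 j)
    obtain ⟨k, hk⟩ := hg.2 i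
    exact ⟨k, by rwa [iterate_eq_of_eqOn_of_mapsTo (T.piecewise_eqOn g τ) hgT k hi]⟩

end RootedForest

section ForestWeight

variable {V R : Type*} [Fintype V] [DecidableEq V] [CommSemiring R]

/-- The total weight `e(𝓕_S)` of the directed forests rooted at `S`, for edge weights `M`. -/
noncomputable def forestWeight (M : Matrix V V R) (S : Finset V) : R :=
  ∑ τ : V → V with IsRootedForest S τ, ∏ j ∈ Sᶜ, M j (τ j)

theorem prod_sdiff_mul_forestWeight (M : Matrix V V R) {S T : Finset V} {g : V → V} (hST : S ⊆ T)
    (hg : IsRootedForest S g) (hgT : Set.MapsTo g T T) :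
    (∏ j ∈ T \ S, M j (g j)) * forestWeight M T =
      ∑ τ : V → V with IsRootedForest S τ ∧ Set.EqOn τ g T, ∏ j ∈ Sᶜ, M j (τ j) := by
  have hST' : (S : Set V) ⊆ T := coe_subset.mpr hST
  rw [forestWeight, mul_sum]
  refine sum_nbij' (fun τ => (T : Set V).piecewise g τ) (fun τ => (T : Set V).piecewise id τ)
    ?mapsTo_grow ?mapsTo_cut ?cut_grow ?grow_cut ?weight
  case mapsTo_grow =>
    simp only [mem_filter_univ]
    exact fun τ hτ => ⟨hg.piecewise hST' hgT hτ, Set.piecewise_eqOn _ _ _⟩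
  case mapsTo_cut =>
    simp only [mem_filter_univ]
    exact fun τ hτ => hτ.1.piecewise_id hST'
  case cut_grow =>
    simp only [mem_filter_univ]
    intro τ hτ
    ext j
    by_cases hj : j ∈ T
    · simp [hj, hτ.1 j hj]
    · simp [hj]
  case grow_cut =>
    simp only [mem_filter_univ]
    intro τ hτ
    ext j
    by_cases hj : j ∈ T
    · simp [hj, hτ.2 hj]
    · simp [hj]
  case weight =>
    intro τ _
    rw [← prod_sdiff (compl_subset_compl.mpr hST), compl_sdiff_compl]
    congr 1 <;> refine prod_congr rfl fun j hj => ?_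
    · rw [Set.piecewise_eq_of_mem _ _ _ (mem_sdiff.mp hj).1]
    · rw [Set.piecewise_eq_of_notMem _ _ _ (mem_compl.mp hj)]

end ForestWeight

section Path

variable {V : Type*} {t : ℕ} {f : Fin (t + 1) → V} {τ : V → V} {a b : V}

/-- `f` lists the vertices of a path with `t` steps from `a` to `b`, all of them distinct. -/
def IsSimplePath (a b : V) (f : Fin (t + 1) → V) : Prop :=
  Function.Injective f ∧ f 0 = a ∧ f (Fin.last t) = b

/-- The path `f` runs along the edges `j → τ j` of the forest encoded by `τ`. -/
def Follows (τ : V → V) (f : Fin (t + 1) → V) : Prop :=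
  ∀ s : Fin t, τ (f s.castSucc) = f s.succ

theorem Follows.apply_eq_iterate (h : Follows τ f) (s : Fin (t + 1)) :
    f s = τ^[(s : ℕ)] (f 0) := by
  induction s using Fin.induction with
  | zero => rfl
  | succ s ih =>
    rw [← h, ih, Fin.val_succ, Function.iterate_succ_apply', Fin.val_castSucc]

theorem injOn_iterate_of_isLeast (h : IsLeast {k | τ^[k] a = b} t) :
    Set.InjOn (fun k => τ^[k] a) (Set.Iic t) := by
  have ne_of_lt {i j : ℕ} (hij : i < j) (hj : j ≤ t) : τ^[i] a ≠ τ^[j] a := by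
    intro heq
    have early_visit : τ^[t - j + i] a = b := by
      rw [Function.iterate_add_apply, heq, ← Function.iterate_add_apply, Nat.sub_add_cancel hj]
      exact h.1
    have := h.2 early_visit
    omega
  intro i hi j hj heq
  rcases lt_trichotomy i j with hij | hij | hij
  · exact absurd heq (ne_of_lt hij hj)
  · exact hij
  · exact absurd heq.symm (ne_of_lt hij hi)

theorem isSimplePath_and_follows_iff :
    IsSimplePath a b f ∧ Follows τ f ↔
      IsLeast {k | τ^[k] a = b} t ∧ f = fun s : Fin (t + 1) => τ^[(s : ℕ)] a := by
  constructor
  · rintro ⟨⟨hinj, rfl, rfl⟩, hτ⟩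
    refine ⟨⟨(hτ.apply_eq_iterate (Fin.last t)).symm, fun k hk => ?_⟩, funext hτ.apply_eq_iterate⟩
    by_contra! hkt
    have hlast : f ⟨k, by omega⟩ = f (Fin.last t) := (hτ.apply_eq_iterate _).trans hk
    exact hkt.ne (congrArg Fin.val (hinj hlast))
  · rintro ⟨ht, rfl⟩
    exact ⟨⟨fun i j hij => Fin.ext (injOn_iterate_of_isLeast ht i.is_le j.is_le hij), rfl, ht.1⟩,
      fun s => (Function.iterate_succ_apply' τ s a).symm⟩

theorem sum_isSimplePath_and_follows {R : Type*} [AddCommMonoid R] [Fintype V]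
    (h : ∃ k, τ^[k] a = b) (w : R) :
    ∑ t ∈ range (Fintype.card V),
      ∑ f : Fin (t + 1) → V with IsSimplePath a b f ∧ Follows τ f, w = w := by
  obtain ⟨t, ht⟩ : ∃ t, IsLeast {k | τ^[k] a = b} t := ⟨Nat.find h, Nat.isLeast_find h⟩
  have ht_lt : t < Fintype.card V := by
    obtain ⟨hinj, -⟩ := (isSimplePath_and_follows_iff.mpr ⟨ht, rfl⟩).1
    simpa using Fintype.card_le_of_injective _ hinj
  have isLeast_iff (u : ℕ) : IsLeast {k | τ^[k] a = b} u ↔ u = t :=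
    ⟨fun hu => hu.unique ht, fun hu => hu ▸ ht⟩
  simp only [sum_filter, isSimplePath_and_follows_iff, isLeast_iff]
  rw [sum_eq_single_of_mem t (mem_range.mpr ht_lt) fun u _ hu => by simp [hu]]
  simp

/-- The map sending each vertex of the path `f` to the next one. To make it a tree rooted at the
end of `f`, all other vertices, including that end, are sent to the end. -/
noncomputable def pathSucc (f : Fin (t + 1) → V) : V → V :=
  Function.extend (fun s : Fin t => f s.castSucc) (fun s => f s.succ) fun _ => f (Fin.last t)

theorem pathSucc_apply_castSucc (hf : Function.Injective f) (s : Fin t) :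
    pathSucc f (f s.castSucc) = f s.succ :=
  (hf.comp (Fin.castSucc_injective t)).extend_apply _ _ s

theorem pathSucc_apply_last (hf : Function.Injective f) :
    pathSucc f (f (Fin.last t)) = f (Fin.last t) :=
  Function.extend_apply' _ _ _ fun ⟨s, hs⟩ => s.castSucc_ne_last (hf hs)

theorem pathSucc_apply_of_notMem_range {j : V} (hj : j ∉ Set.range f) :
    pathSucc f j = f (Fin.last t) :=
  Function.extend_apply' _ _ _ fun ⟨s, hs⟩ => hj ⟨s.castSucc, hs⟩

theorem mapsTo_pathSucc (hf : Function.Injective f) :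
    Set.MapsTo (pathSucc f) (Set.range f) (Set.range f) := by
  rintro _ ⟨s, rfl⟩
  cases s using Fin.lastCases with
  | last => exact ⟨Fin.last t, (pathSucc_apply_last hf).symm⟩
  | cast s => exact ⟨s.succ, (pathSucc_apply_castSucc hf s).symm⟩

theorem isRootedForest_pathSucc (hf : Function.Injective f) :
    IsRootedForest {f (Fin.last t)} (pathSucc f) := by
  refine ⟨fun _ hs => hs ▸ pathSucc_apply_last hf, fun j => ?_⟩
  by_cases hj : j ∈ Set.range f
  · obtain ⟨s, rfl⟩ := hj
    induction s using Fin.reverseInduction with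
    | last => exact ⟨0, rfl⟩
    | cast s ih =>
      obtain ⟨k, hk⟩ := ih
      exact ⟨k + 1, by rwa [Function.iterate_succ_apply, pathSucc_apply_castSucc hf]⟩
  · exact ⟨1, pathSucc_apply_of_notMem_range hj⟩

theorem eqOn_pathSucc_iff (hf : Function.Injective f) (hτ : τ (f (Fin.last t)) = f (Fin.last t)) :
    Set.EqOn τ (pathSucc f) (Set.range f) ↔ Follows τ f := by
  simp [Set.eqOn_range, funext_iff, Fin.forall_fin_succ', Follows, pathSucc_apply_castSucc hf,
    pathSucc_apply_last hf, hτ]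

end Path

section Decomposition

variable {V : Type*} [DecidableEq V]

theorem prod_image_sdiff_last {A : Type*} [CommMonoid A] {t : ℕ} {f : Fin (t + 1) → V}
    (hf : Function.Injective f) (φ : V → A) :
    ∏ j ∈ univ.image f \ {f (Fin.last t)}, φ j = ∏ s : Fin t, φ (f s.castSucc) := by
  rw [← image_singleton, ← image_sdiff _ _ hf, prod_image hf.injOn, ← compl_eq_univ_sdiff,
    ← Fin.image_castSucc, prod_image (Fin.castSucc_injective t).injOn]

variable {R : Type*} [Fintype V] [CommSemiring R]

theorem prod_path_mul_forestWeight (M : Matrix V V R) {a b : V} {t : ℕ} {f : Fin (t + 1) → V}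
    (hf : IsSimplePath a b f) :
    (∏ s : Fin t, M (f s.castSucc) (f s.succ)) * forestWeight M (univ.image f) =
      ∑ τ : V → V with IsRootedForest {b} τ ∧ Follows τ f, ∏ j ∈ {b}ᶜ, M j (τ j) := by
  obtain ⟨hinj, -, rfl⟩ := hf
  have hrange : (univ.image f : Set V) = Set.range f := by simp
  have hprod : ∏ s : Fin t, M (f s.castSucc) (f s.succ) =
      ∏ j ∈ univ.image f \ {f (Fin.last t)}, M j (pathSucc f j) := by
    simp only [prod_image_sdiff_last hinj, pathSucc_apply_castSucc hinj]
  rw [hprod, prod_sdiff_mul_forestWeight M (by simp)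
    (by simpa using isRootedForest_pathSucc hinj) (hrange ▸ mapsTo_pathSucc hinj)]
  refine sum_congr (filter_congr fun τ _ => ?_) fun _ _ => rfl
  rw [coe_singleton, hrange]
  exact and_congr_right fun hτ => eqOn_pathSucc_iff hinj (hτ.1 _ rfl)

theorem path_forest_decomposition_of_trees_general (M : Matrix V V R) (a b : V) :
    ∑ t ∈ range (Fintype.card V), ∑ f : Fin (t + 1) → V with IsSimplePath a b f,
      (∏ s : Fin t, M (f s.castSucc) (f s.succ)) * forestWeight M (univ.image f) =
        forestWeight M {b} := by
  calc
    _ = ∑ t ∈ range (Fintype.card V), ∑ f : Fin (t + 1) → V with IsSimplePath a b f,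
          ∑ τ : V → V with IsRootedForest {b} τ ∧ Follows τ f, ∏ j ∈ {b}ᶜ, M j (τ j) :=
      sum_congr rfl fun t _ => sum_congr rfl fun f hf =>
        prod_path_mul_forestWeight M (mem_filter_univ f |>.mp hf)
    _ = ∑ t ∈ range (Fintype.card V), ∑ τ : V → V with IsRootedForest {b} τ,
          ∑ f : Fin (t + 1) → V with IsSimplePath a b f ∧ Follows τ f, ∏ j ∈ {b}ᶜ, M j (τ j) :=
      sum_congr rfl fun t _ => sum_comm' fun f τ => by
        simp only [mem_filter_univ]
        tauto
    _ = ∑ τ : V → V with IsRootedForest {b} τ, ∏ j ∈ {b}ᶜ, M j (τ j) := by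
      rw [sum_comm]
      refine sum_congr rfl fun τ hτ => sum_isSimplePath_and_follows ?_ _
      exact (mem_filter_univ τ |>.mp hτ).2 a
    _ = forestWeight M {b} := by rw [forestWeight, coe_singleton]

end Decomposition

/-- Summing, over all sequences of pairwise distinct states from a to b, the path weight
M_{i₁i₂}⋯M_{i_{t−1}i_t} times the forest weight e(𝓕_{{i₁,…,i_t}}) recovers the total
weight e(𝒯_b) of directed rooted trees with root b. -/
theorem path_forest_decomposition_of_trees (n : ℕ)
    (M : Matrix (Fin n) (Fin n) ℝ)
    (hM0 : ∀ i j, 0 ≤ M i j) (hM1 : ∀ i, ∑ j, M i j = 1)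
    (a b : Fin n)
    (eF : Finset (Fin n) → ℝ)
    (heF : ∀ S, eF S = ∑ τ : Fin n → Fin n,
      if ((∀ s ∈ S, τ s = s) ∧ ∀ j, ∃ k, τ^[k] j ∈ S)
        then ∏ j ∈ Sᶜ, M j (τ j) else 0) :
    (∑ t ∈ Finset.range n, ∑ f : Fin (t + 1) → Fin n,
      if (Function.Injective f ∧ f 0 = a ∧ f (Fin.last t) = b)
        then (∏ s : Fin t, M (f s.castSucc) (f s.succ))
              * eF (Finset.image f Finset.univ)
        else 0)
      = eF {b} := by
  obtain rfl : eF = forestWeight M := funext fun S => by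
    simp only [heF, forestWeight, IsRootedForest, sum_filter, mem_coe]
  simp only [← path_forest_decomposition_of_trees_general M a b, Fintype.card_fin, sum_filter]
  -- The two sides differ only in the decidability instances of the path condition.
  congr!
end
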